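/- Let d ≥ 2, let B be a fixed real d×d matrix, and let Q₁ = (0,1)^d be the open unit cube. There exists a constant C > 0 such that for every w̄ = (v̄, Ū) ∈ Λ there exists a sequence (v_k, U_k) ∈ C_c^∞(Q₁; ℝ^d × S₀^{d×d}) together with q_k ∈ C_c^∞(Q₁) satisfying div U_k + ∇q_k = Bv_k and div v_k = 0 on ℝ^d, such that: (a) sup_{x ∈ Q₁} dist((v_k, U_k)(x), [−w̄, w̄]) → 0 as k → ∞, where [−w̄, w̄] is the closed segment joining −w̄ and w̄; (b) (v_k, U_k) → 0 in the sense of distributions, i.e. ∫ (v_k, U_k)·φ dx → 0 for every φ ∈ C_c^∞(Q₁); (c) ∫_{Q₁} |(v_k, U_k)(x)|² dx ≥ C|w̄|² for all k. -/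

import Mathlib

open MeasureTheory

noncomputable section

/-- Vectors in ℝ^d. -/
abbrev Vec (d : ℕ) := Fin d → ℝ

/-- Matrices (as functions). -/
abbrev Mat (d : ℕ) := Fin d → Fin d → ℝ

/-- The space S₀^{d×d} of symmetric trace-free d×d matrices, as a submodule. -/
def S0 (d : ℕ) : Submodule ℝ (Mat d) where
  carrier := {U | (∀ i j, U i j = U j i) ∧ ∑ i, U i i = 0}
  add_mem' := by
    rintro U V ⟨hU1, hU2⟩ ⟨hV1, hV2⟩
    refine ⟨fun i j => by simp [hU1 i j, hV1 i j], ?_⟩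
    simp [Finset.sum_add_distrib, hU2, hV2]
  zero_mem' := ⟨fun i j => rfl, by simp⟩
  smul_mem' := by
    rintro c U ⟨hU1, hU2⟩
    refine ⟨fun i j => by simp [hU1 i j], ?_⟩
    simp [← Finset.mul_sum, hU2]

/-- Partial derivative ∂ᵢ of a scalar function. -/
def pd {d : ℕ} (i : Fin d) (f : Vec d → ℝ) (x : Vec d) : ℝ :=
  fderiv ℝ f x (Pi.single i 1)

/-- The wave cone Λ: states `(v̄, Ū)` with `v̄ ≠ 0` for which there are `q̄ ∈ ℝ` and
`ξ ≠ 0` with `Ū ξ + q̄ ξ = 0` and `v̄ · ξ = 0`. -/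
def Lam (d : ℕ) : Set (Vec d × S0 d) :=
  {w | w.1 ≠ 0 ∧ ∃ (q : ℝ) (ξ : Vec d), ξ ≠ 0 ∧
    (∀ i, (∑ j, (w.2 : Mat d) i j * ξ j) + q * ξ i = 0) ∧ (∑ i, w.1 i * ξ i = 0)}

/-- The open unit cube Q₁ = (0,1)^d. -/
def unitCube (d : ℕ) : Set (Vec d) := {x | ∀ i, x i ∈ Set.Ioo (0 : ℝ) 1}

open Filter Topology

/-!
The states are derivatives of the potential `ψ = -t⁻³ η sin (t ξ·x)`, where `η` is a cutoff in the
cube, `|ξ| = 1`, `Ū ξ + q̄ ξ = 0` and `v̄ · ξ = 0`. Put `h = v̄ ∂_ξ ψ - ξ ∂_v̄ ψ`. The velocity is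
`v = Δh`, which is divergence free. The flux `U` is the trace-free part of the sum of the stress
`∇(Bh) + (∇(Bh))ᵀ - div (Bh) I`, whose divergence is `Δ(Bh) = B v`, and of a double curl of
`∂_ξ ψ` with amplitude `Ū + q̄ I`; the pressure is the trace part. Third derivatives of `ψ` are of
order one and lower ones vanish as `t → ∞`, so the stress of `Bh` disappears in the limit and
`(v, U) = η cos (t ξ·x) w̄ + o(1)` uniformly. Since `|η cos| ≤ 1`, the leading term lies on the
segment; it tends to `0` weakly by the Riemann-Lebesgue lemma, and its energy tends to
`|w̄|² ∫ η² / 2` because `cos²` averages to `1/2`.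
-/

open TopologicalSpace (Opens)
open scoped Distributions LineDeriv

section TestFunctionCalculus

variable {E F : Type*} [NormedAddCommGroup E] [NormedSpace ℝ E] [NormedAddCommGroup F]
  [NormedSpace ℝ F] {Ω : Opens E}

lemma testFunction_eq_zero_of_notMem (f : 𝓓(Ω, F)) {x : E} (hx : x ∉ Ω) : f x = 0 :=
  image_eq_zero_of_notMem_tsupport fun h => hx (f.tsupport_subset h)

lemma testFunction_sum_apply {κ : Type*} (s : Finset κ) (f : κ → 𝓓(Ω, F)) (x : E) :
    (∑ k ∈ s, f k) x = ∑ k ∈ s, f k x :=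
  map_sum ((Pi.evalAddMonoidHom _ x).comp (FunLike.coeAddMonoidHom 𝓓(Ω, F) E F)) f s

lemma lineDerivOp_apply_eq_fderiv (v : E) (f : 𝓓(Ω, F)) (x : E) :
    (∂_{v} f) x = fderiv ℝ f x v := by
  rw [TestFunction.lineDerivOp_eq_lineDerivCLM ℝ, TestFunction.lineDerivCLM_eq_fderivCLM,
    TestFunction.fderivCLM_apply, if_pos (by simp)]

lemma lineDerivOp_comm (v w : E) (f : 𝓓(Ω, F)) : ∂_{v} (∂_{w} f) = ∂_{w} (∂_{v} f) := by
  have second_fderiv (v w x : E) : (∂_{v} (∂_{w} f)) x = fderiv ℝ (fderiv ℝ f) x v w := by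
    have hf : DifferentiableAt ℝ (fderiv ℝ f) x :=
      (f.contDiff.fderiv_right (m := (⊤ : ℕ∞)) (by simp)).differentiable (by simp) x
    have hw : ⇑(∂_{w} f : 𝓓(Ω, F)) = fun y => fderiv ℝ f y w :=
      funext (lineDerivOp_apply_eq_fderiv w f)
    rw [lineDerivOp_apply_eq_fderiv, hw, fderiv_clm_apply hf (by fun_prop)]
    simp
  have hsymm (x : E) : IsSymmSndFDerivAt ℝ f x :=
    f.contDiff.contDiffAt.isSymmSndFDerivAt (by
      simpa using WithTop.coe_le_coe.2 (le_top : (2 : ℕ∞) ≤ ⊤))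
  ext x
  rw [second_fderiv, second_fderiv, hsymm x v w]

lemma lineDerivOp_sub (v : E) (f g : 𝓓(Ω, F)) : ∂_{v} (f - g) = ∂_{v} f - ∂_{v} g := by
  simp only [sub_eq_add_neg, LineDeriv.lineDerivOp_add, LineDeriv.lineDerivOp_neg]

end TestFunctionCalculus

section StressPotentials

variable {ι F : Type*} [Fintype ι] [DecidableEq ι] [NormedAddCommGroup F] [NormedSpace ℝ F]
  {Ω : Opens (ι → ℝ)}

local notation "𝐞" i:max => (Pi.single i (1 : ℝ) : _ → ℝ)

/-- The divergence of a vector field; for a matrix field `A`, `divergence (A i)` is the `i`-th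
entry of the row-wise divergence. -/
def divergence (v : ι → 𝓓(Ω, F)) : 𝓓(Ω, F) := ∑ i : ι, ∂_{𝐞 i} (v i)

/-- The Laplacian in Cartesian coordinates. Mathlib's `Δ` asks for an inner product space, which
`ι → ℝ` with its supremum norm is not. -/
def coordLaplacian (f : 𝓓(Ω, F)) : 𝓓(Ω, F) := ∑ i : ι, ∂_{𝐞 i} (∂_{𝐞 i} f)

lemma sum_smul_lineDerivOp_single (a : ι → ℝ) (f : 𝓓(Ω, F)) :
    ∑ i : ι, a i • ∂_{𝐞 i} f = ∂_{a} f := by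
  simp_rw [← LineDeriv.lineDerivOp_left_smul, ← LineDeriv.lineDerivOp_left_sum]
  rw [← pi_eq_sum_univ' a]

lemma lineDerivOp_divergence (a : ι → ℝ) (v : ι → 𝓓(Ω, F)) :
    ∂_{a} (divergence v) = divergence fun i => ∂_{a} (v i) := by
  simp only [divergence, LineDeriv.lineDerivOp_sum, lineDerivOp_comm a]

lemma divergence_add (u v : ι → 𝓓(Ω, F)) :
    divergence (u + v) = divergence u + divergence v := by
  simp only [divergence, Pi.add_apply, LineDeriv.lineDerivOp_add, Finset.sum_add_distrib]

lemma divergence_sub (u v : ι → 𝓓(Ω, F)) :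
    divergence (u - v) = divergence u - divergence v := by
  simp only [divergence, Pi.sub_apply, lineDerivOp_sub, Finset.sum_sub_distrib]

lemma divergence_smul_const (a : ι → ℝ) (f : 𝓓(Ω, F)) :
    divergence (fun i => a i • f) = ∂_{a} f := by
  simp only [divergence, LineDeriv.lineDerivOp_smul, sum_smul_lineDerivOp_single]

lemma divergence_diagonal (f : 𝓓(Ω, F)) (i : ι) :
    divergence (Matrix.diagonal (fun _ => f) i) = ∂_{𝐞 i} f := by
  rw [divergence, Finset.sum_eq_single i (fun j _ hj => by
    rw [Matrix.diagonal_apply_ne' _ hj, LineDeriv.lineDerivOp_zero]) (by simp),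
    Matrix.diagonal_apply_eq]

lemma divergence_coordLaplacian (v : ι → 𝓓(Ω, F)) :
    divergence (fun i => coordLaplacian (v i)) = coordLaplacian (divergence v) := by
  simp only [coordLaplacian, lineDerivOp_divergence]
  simp only [divergence, LineDeriv.lineDerivOp_sum]
  exact Finset.sum_comm

lemma coordLaplacian_sum_smul (c : ι → ℝ) (v : ι → 𝓓(Ω, F)) :
    coordLaplacian (∑ i, c i • v i) = ∑ i, c i • coordLaplacian (v i) := by
  simp only [coordLaplacian, LineDeriv.lineDerivOp_sum, LineDeriv.lineDerivOp_smul,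
    Finset.smul_sum]
  exact Finset.sum_comm

/-- The field `a ∂_b ψ - b ∂_a ψ`, which is `∇^⊥ ψ` in the plane spanned by `a` and `b`. -/
def rotatedGradient (a b : ι → ℝ) (ψ : 𝓓(Ω, F)) (i : ι) : 𝓓(Ω, F) :=
  a i • ∂_{b} ψ - b i • ∂_{a} ψ

lemma divergence_rotatedGradient (a b : ι → ℝ) (ψ : 𝓓(Ω, F)) :
    divergence (rotatedGradient a b ψ) = 0 := by
  have hsplit : rotatedGradient a b ψ = (fun i => a i • ∂_{b} ψ) - fun i => b i • ∂_{a} ψ := rfl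
  rw [hsplit, divergence_sub, divergence_smul_const, divergence_smul_const, lineDerivOp_comm,
    sub_self]

/-- The stress `∇h + (∇h)ᵀ - (div h) I`: a symmetric matrix field with divergence `Δh`. -/
def viscousStress (h : ι → 𝓓(Ω, F)) : Matrix ι ι 𝓓(Ω, F) :=
  Matrix.of (fun i j => ∂_{𝐞 i} (h j) + ∂_{𝐞 j} (h i)) - Matrix.diagonal fun _ => divergence h

lemma isSymm_viscousStress (h : ι → 𝓓(Ω, F)) : (viscousStress h).IsSymm :=
  .sub (.ext fun _ _ => add_comm _ _) (Matrix.isSymm_diagonal _)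

lemma divergence_viscousStress (h : ι → 𝓓(Ω, F)) (i : ι) :
    divergence (viscousStress h i) = coordLaplacian (h i) := by
  have hsplit : viscousStress h i = (fun j => ∂_{𝐞 i} (h j)) + (fun j => ∂_{𝐞 j} (h i)) -
      Matrix.diagonal (fun _ => divergence h) i := rfl
  rw [hsplit, divergence_sub, divergence_add, ← lineDerivOp_divergence, divergence_diagonal,
    add_sub_cancel_left, divergence, coordLaplacian]

/-- The potential `∂_ξ∂_ξ φ N - ξ ⊗ N∇∂_ξ φ - N∇∂_ξ φ ⊗ ξ + (N : ∇²φ) ξ ⊗ ξ`, a double curl of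
`φ` in the direction `ξ`: its divergence vanishes and, when `Nξ = 0`, its leading part on plane
waves of frequency `ξ` is a multiple of `N`. -/
def doubleCurl (N : Matrix ι ι ℝ) (ξ : ι → ℝ) (φ : 𝓓(Ω, F)) : Matrix ι ι 𝓓(Ω, F) :=
  Matrix.of fun i j => N i j • ∂_{ξ} (∂_{ξ} φ) - ξ i • ∂_{N j} (∂_{ξ} φ) -
    ξ j • ∂_{N i} (∂_{ξ} φ) + ξ j • ξ i • divergence fun m => ∂_{N m} φ

lemma isSymm_doubleCurl {N : Matrix ι ι ℝ} (hN : N.IsSymm) (ξ : ι → ℝ) (φ : 𝓓(Ω, F)) :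
    (doubleCurl N ξ φ).IsSymm := by
  refine .ext fun i j => ?_
  simp only [doubleCurl, Matrix.of_apply, hN.apply i j, smul_comm (ξ i) (ξ j)]
  abel

lemma divergence_doubleCurl (N : Matrix ι ι ℝ) (ξ : ι → ℝ) (φ : 𝓓(Ω, F)) (i : ι) :
    divergence (doubleCurl N ξ φ i) = 0 := by
  have hsplit : doubleCurl N ξ φ i = (fun j => N i j • ∂_{ξ} (∂_{ξ} φ)) -
      (fun j => ∂_{ξ} (ξ i • ∂_{N j} φ)) - (fun j => ξ j • ∂_{N i} (∂_{ξ} φ)) +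
      (fun j => ξ j • ξ i • divergence fun m => ∂_{N m} φ) := by
    funext j
    simp only [doubleCurl, Matrix.of_apply, Pi.add_apply, Pi.sub_apply,
      LineDeriv.lineDerivOp_smul, lineDerivOp_comm ξ (N j)]
  have hcross : (divergence fun j => ∂_{ξ} (ξ i • ∂_{N j} φ)) =
      ∂_{ξ} (ξ i • divergence fun m => ∂_{N m} φ) := by
    rw [← lineDerivOp_divergence]
    simp only [divergence, LineDeriv.lineDerivOp_smul, Finset.smul_sum]
  rw [hsplit, divergence_add, divergence_sub, divergence_sub, divergence_smul_const, hcross,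
    divergence_smul_const, divergence_smul_const, lineDerivOp_comm ξ (N i)]
  abel

/-- The average of the diagonal entries; the trace part of `A` is `meanTrace A • I`. -/
def meanTrace (A : Matrix ι ι 𝓓(Ω, F)) : 𝓓(Ω, F) := (Fintype.card ι : ℝ)⁻¹ • A.trace

/-- The deviator (trace-free part) of a matrix field. -/
def deviator (A : Matrix ι ι 𝓓(Ω, F)) : Matrix ι ι 𝓓(Ω, F) :=
  A - Matrix.diagonal fun _ => meanTrace A

lemma isSymm_deviator {A : Matrix ι ι 𝓓(Ω, F)} (hA : A.IsSymm) : (deviator A).IsSymm :=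
  hA.sub (Matrix.isSymm_diagonal _)

lemma trace_deviator (A : Matrix ι ι 𝓓(Ω, F)) : (deviator A).trace = 0 := by
  cases isEmpty_or_nonempty ι
  · exact Matrix.trace_eq_zero_of_isEmpty _
  · rw [deviator, Matrix.trace_sub, Matrix.trace_diagonal, Finset.sum_const, Finset.card_univ,
      meanTrace, ← Nat.cast_smul_eq_nsmul ℝ, smul_inv_smul₀ (by simp), sub_self]

lemma divergence_deviator (A : Matrix ι ι 𝓓(Ω, F)) (i : ι) :
    divergence (deviator A i) + ∂_{𝐞 i} (meanTrace A) = divergence (A i) := by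
  have hsplit : deviator A i = A i - Matrix.diagonal (fun _ => meanTrace A) i := rfl
  rw [hsplit, divergence_sub, divergence_diagonal, sub_add_cancel]

/-- The divergence-free velocity `Δ(a ∂_ξ ψ - ξ ∂_a ψ)`. -/
def velocity (a ξ : ι → ℝ) (ψ : 𝓓(Ω, F)) (i : ι) : 𝓓(Ω, F) :=
  coordLaplacian (rotatedGradient a ξ ψ i)

lemma divergence_velocity (a ξ : ι → ℝ) (ψ : 𝓓(Ω, F)) : divergence (velocity a ξ ψ) = 0 := by
  have h : divergence (velocity a ξ ψ) = coordLaplacian (divergence (rotatedGradient a ξ ψ)) :=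
    divergence_coordLaplacian _
  simp only [h, divergence_rotatedGradient, coordLaplacian, LineDeriv.lineDerivOp_zero,
    Finset.sum_const_zero]

/-- The symmetric matrix field with divergence `B (velocity a ξ ψ)` whose leading part on plane
waves of frequency `ξ` is a multiple of `N`. Its trace part is absorbed by the pressure. -/
def stress (B N : Matrix ι ι ℝ) (a ξ : ι → ℝ) (ψ : 𝓓(Ω, F)) : Matrix ι ι 𝓓(Ω, F) :=
  viscousStress (fun i => ∑ j, B i j • rotatedGradient a ξ ψ j) + doubleCurl N ξ (∂_{ξ} ψ)

lemma isSymm_stress (B : Matrix ι ι ℝ) {N : Matrix ι ι ℝ} (hN : N.IsSymm) (a ξ : ι → ℝ)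
    (ψ : 𝓓(Ω, F)) : (stress B N a ξ ψ).IsSymm :=
  (isSymm_viscousStress _).add (isSymm_doubleCurl hN _ _)

lemma divergence_stress (B N : Matrix ι ι ℝ) (a ξ : ι → ℝ) (ψ : 𝓓(Ω, F)) (i : ι) :
    divergence (stress B N a ξ ψ i) = ∑ j, B i j • velocity a ξ ψ j := by
  have hsplit : stress B N a ξ ψ i =
      viscousStress (fun i => ∑ j, B i j • rotatedGradient a ξ ψ j) i +
        doubleCurl N ξ (∂_{ξ} ψ) i := rfl
  rw [hsplit, divergence_add, divergence_viscousStress, divergence_doubleCurl, add_zero,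
    coordLaplacian_sum_smul]
  simp only [velocity]

end StressPotentials

section PlaneWaves

variable {E F : Type*} [NormedAddCommGroup E] [NormedSpace ℝ E] [NormedAddCommGroup F]
  [NormedSpace ℝ F] {Ω : Opens E}

/-- The test function `a sin ℓ + b cos ℓ`, a plane wave of frequency `ℓ` with amplitudes `a`
and `b`. -/
def planeWave (ℓ : StrongDual ℝ E) (a b : 𝓓(Ω, ℝ)) : 𝓓(Ω, ℝ) where
  toFun x := a x * Real.sin (ℓ x) + b x * Real.cos (ℓ x)
  contDiff' := (a.contDiff.mul (Real.contDiff_sin.comp ℓ.contDiff)).add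
    (b.contDiff.mul (Real.contDiff_cos.comp ℓ.contDiff))
  hasCompactSupport' := a.hasCompactSupport.mul_right.add b.hasCompactSupport.mul_right
  tsupport_subset' := (tsupport_add _ _).trans <| Set.union_subset
    (tsupport_mul_subset_left.trans a.tsupport_subset)
    (tsupport_mul_subset_left.trans b.tsupport_subset)

lemma planeWave_apply (ℓ : StrongDual ℝ E) (a b : 𝓓(Ω, ℝ)) (x : E) :
    planeWave ℓ a b x = a x * Real.sin (ℓ x) + b x * Real.cos (ℓ x) := rfl

lemma lineDerivOp_planeWave (e : E) (ℓ : StrongDual ℝ E) (a b : 𝓓(Ω, ℝ)) :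
    ∂_{e} (planeWave ℓ a b) = planeWave ℓ (∂_{e} a - ℓ e • b) (∂_{e} b + ℓ e • a) := by
  ext x
  have ha := (a.contDiff.differentiable (by simp) x).hasFDerivAt
  have hb := (b.contDiff.differentiable (by simp) x).hasFDerivAt
  have hosc : fderiv ℝ (planeWave ℓ a b) x = _ :=
    ((ha.mul ℓ.hasFDerivAt.sin).add (hb.mul ℓ.hasFDerivAt.cos)).fderiv
  rw [lineDerivOp_apply_eq_fderiv, hosc]
  simp only [planeWave_apply, lineDerivOp_apply_eq_fderiv, add_apply, sub_apply, smul_apply,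
    smul_eq_mul]
  ring

/-- `IsAsymptoticPlaneWave η ℓ f c` says that `f t = η cos (t ℓ) c + o(1)` uniformly as
`t → ∞`. -/
def IsAsymptoticPlaneWave (η : E → ℝ) (ℓ : StrongDual ℝ E) (f : ℝ → E → F) (c : F) : Prop :=
  ∀ ε > 0, ∀ᶠ t in atTop, ∀ x, dist (f t x) ((η x * Real.cos (t * ℓ x)) • c) < ε

namespace IsAsymptoticPlaneWave

variable {η : E → ℝ} {ℓ : StrongDual ℝ E} {f g : ℝ → E → F} {c c' : F}

lemma congr' (hf : IsAsymptoticPlaneWave η ℓ f c) (h : ∀ᶠ t in atTop, f t = g t) :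
    IsAsymptoticPlaneWave η ℓ g c := fun ε hε => by
  filter_upwards [hf ε hε, h] with t ht hfg
  rwa [← hfg]

lemma zero : IsAsymptoticPlaneWave η ℓ (fun _ _ => (0 : F)) 0 := fun ε hε =>
  .of_forall fun t x => by rwa [smul_zero, dist_self]

lemma add (hf : IsAsymptoticPlaneWave η ℓ f c) (hg : IsAsymptoticPlaneWave η ℓ g c') :
    IsAsymptoticPlaneWave η ℓ (fun t x => f t x + g t x) (c + c') := fun ε hε => by
  filter_upwards [hf _ (half_pos hε), hg _ (half_pos hε)] with t hft hgt x
  rw [smul_add]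
  exact (dist_add_add_le _ _ _ _).trans_lt ((add_lt_add (hft x) (hgt x)).trans_eq (add_halves ε))

lemma const_smul (r : ℝ) (hf : IsAsymptoticPlaneWave η ℓ f c) :
    IsAsymptoticPlaneWave η ℓ (fun t x => r • f t x) (r • c) := fun ε hε => by
  filter_upwards [hf (ε / (‖r‖ + 1)) (by positivity)] with t ht x
  rw [smul_comm, dist_smul₀]
  calc ‖r‖ * dist (f t x) ((η x * Real.cos (t * ℓ x)) • c)
      ≤ (‖r‖ + 1) * dist (f t x) ((η x * Real.cos (t * ℓ x)) • c) := by gcongr; linarith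
    _ < (‖r‖ + 1) * (ε / (‖r‖ + 1)) := by gcongr; exact ht x
    _ = ε := by field_simp

lemma sub (hf : IsAsymptoticPlaneWave η ℓ f c) (hg : IsAsymptoticPlaneWave η ℓ g c') :
    IsAsymptoticPlaneWave η ℓ (fun t x => f t x - g t x) (c - c') := by
  simpa only [neg_one_smul, ← sub_eq_add_neg] using hf.add (hg.const_smul (-1))

lemma sum {κ : Type*} (s : Finset κ) {f : κ → ℝ → E → F} {c : κ → F}
    (hf : ∀ k, IsAsymptoticPlaneWave η ℓ (f k) (c k)) :
    IsAsymptoticPlaneWave η ℓ (fun t x => ∑ k ∈ s, f k t x) (∑ k ∈ s, c k) := by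
  classical
  induction s using Finset.induction_on with
  | empty => simpa only [Finset.sum_empty] using zero
  | insert k s hk ih => simpa only [Finset.sum_insert hk] using (hf k).add ih

lemma pi {κ : Type*} [Fintype κ] {G : κ → Type*} [∀ k, NormedAddCommGroup (G k)]
    [∀ k, NormedSpace ℝ (G k)] {f : ℝ → E → ∀ k, G k} {c : ∀ k, G k}
    (hf : ∀ k, IsAsymptoticPlaneWave η ℓ (fun t x => f t x k) (c k)) :
    IsAsymptoticPlaneWave η ℓ f c := fun ε hε => by
  filter_upwards [eventually_all.2 fun k => hf k ε hε] with t ht x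
  exact (dist_pi_lt_iff hε).2 fun k => ht k x

lemma prodMk {G : Type*} [NormedAddCommGroup G] [NormedSpace ℝ G] {g : ℝ → E → G} {c' : G}
    (hf : IsAsymptoticPlaneWave η ℓ f c) (hg : IsAsymptoticPlaneWave η ℓ g c') :
    IsAsymptoticPlaneWave η ℓ (fun t x => (f t x, g t x)) (c, c') := fun ε hε => by
  filter_upwards [hf ε hε, hg ε hε] with t hft hgt x
  exact max_lt (hft x) (hgt x)

lemma of_coe {p : Submodule ℝ F} {f : ℝ → E → p} {c : p}
    (hf : IsAsymptoticPlaneWave η ℓ (fun t x => (f t x : F)) c) :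
    IsAsymptoticPlaneWave η ℓ f c := hf

lemma planeWave_zero (η : 𝓓(Ω, ℝ)) (ℓ : StrongDual ℝ E) :
    IsAsymptoticPlaneWave η ℓ (fun t => ⇑(planeWave (t • ℓ) 0 η)) (1 : ℝ) := fun ε hε =>
  .of_forall fun t x => by simpa [planeWave_apply] using hε

lemma inv_pow_smul_planeWave (p : ℕ) (a b : 𝓓(Ω, ℝ)) :
    IsAsymptoticPlaneWave η ℓ (fun t => ⇑(t⁻¹ ^ (p + 1) • planeWave (t • ℓ) a b)) 0 := by
  obtain ⟨Ka, hKa⟩ := a.hasCompactSupport.exists_bound_of_continuous a.continuous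
  obtain ⟨Kb, hKb⟩ := b.hasCompactSupport.exists_bound_of_continuous b.continuous
  have bound (t : ℝ) (x : E) : ‖planeWave (t • ℓ) a b x‖ ≤ Ka + Kb := by
    refine (norm_add_le _ _).trans (add_le_add ?_ ?_) <;> rw [norm_mul]
    · exact (mul_le_of_le_one_right (norm_nonneg _) (Real.abs_sin_le_one _)).trans (hKa x)
    · exact (mul_le_of_le_one_right (norm_nonneg _) (Real.abs_cos_le_one _)).trans (hKb x)
  have decay : Tendsto (fun t : ℝ => |t⁻¹ ^ (p + 1)| * (Ka + Kb)) atTop (𝓝 0) := by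
    simpa using ((tendsto_inv_atTop_zero.pow (p + 1)).abs.mul_const (Ka + Kb))
  intro ε hε
  filter_upwards [decay.eventually_lt_const hε] with t ht x
  rw [smul_zero, dist_zero_right, smul_apply, norm_smul]
  exact (mul_le_mul_of_nonneg_left (bound t x) (abs_nonneg _)).trans_lt ht

lemma eventually_abs_sq_sub_lt {η : 𝓓(Ω, ℝ)} {f : ℝ → E → ℝ} {c : ℝ}
    (hf : IsAsymptoticPlaneWave η ℓ f c) {ε : ℝ} (hε : 0 < ε) :
    ∀ᶠ t in atTop, ∀ x, |f t x ^ 2 - (η x * Real.cos (t * ℓ x) * c) ^ 2| < ε := by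
  obtain ⟨K, hK⟩ := η.hasCompactSupport.exists_bound_of_continuous η.continuous
  have hK0 : 0 ≤ K := (norm_nonneg _).trans (hK 0)
  filter_upwards [hf 1 one_pos, hf (ε / (1 + 2 * (K * |c|))) (by positivity)] with t h1 hε' x
  set A := η x * Real.cos (t * ℓ x) * c with hA
  have hAK : |A| ≤ K * |c| := by
    rw [hA, abs_mul, abs_mul]
    gcongr
    exact (mul_le_of_le_one_right (abs_nonneg _) (Real.abs_cos_le_one _)).trans (hK x)
  have hsum : |f t x + A| < 1 + 2 * (K * |c|) := by
    calc |f t x + A| = |(f t x - A) + 2 * A| := by ring_nf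
      _ ≤ |f t x - A| + 2 * |A| := (abs_add_le _ _).trans_eq (by rw [abs_mul, abs_two])
      _ < 1 + 2 * (K * |c|) := add_lt_add_of_lt_of_le (h1 x) (by gcongr)
  calc |f t x ^ 2 - A ^ 2| = |f t x + A| * |f t x - A| := by rw [← abs_mul]; ring_nf
    _ ≤ (1 + 2 * (K * |c|)) * |f t x - A| := by gcongr
    _ < (1 + 2 * (K * |c|)) * (ε / (1 + 2 * (K * |c|))) := by gcongr; exact hε' x
    _ = ε := by field_simp

lemma eventually_infDist_segment_lt (hη : ∀ x, |η x| ≤ 1)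
    (hf : IsAsymptoticPlaneWave η ℓ f c) {δ : ℝ} (hδ : 0 < δ) :
    ∀ᶠ t in atTop, ∀ x, Metric.infDist (f t x) (segment ℝ (-c) c) < δ := by
  filter_upwards [hf δ hδ] with t ht x
  refine (Metric.infDist_le_dist_of_mem ?_).trans_lt (ht x)
  set s := η x * Real.cos (t * ℓ x)
  have hs : |s| ≤ 1 := by
    rw [abs_mul]
    exact mul_le_one₀ (hη x) (abs_nonneg _) (Real.abs_cos_le_one _)
  obtain ⟨hs₁, hs₂⟩ := abs_le.1 hs
  exact ⟨(1 - s) / 2, (1 + s) / 2, by linarith, by linarith, by ring, by module⟩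

end IsAsymptoticPlaneWave

/-- The potential `-t⁻³ η sin (t ℓ)`: the scaling makes its third derivatives of order one and
its lower derivatives vanish as `t → ∞`. -/
def wavePotential (η : 𝓓(Ω, ℝ)) (ℓ : StrongDual ℝ E) (t : ℝ) : 𝓓(Ω, ℝ) :=
  -(t⁻¹ ^ 3 • planeWave (t • ℓ) η 0)

variable (η : 𝓓(Ω, ℝ)) (ℓ : StrongDual ℝ E)

lemma isAsymptoticPlaneWave_lineDerivOp_two (a b : E) :
    IsAsymptoticPlaneWave η ℓ (fun t x => (∂_{a} (∂_{b} (wavePotential η ℓ t))) x) 0 := by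
  have h := ((IsAsymptoticPlaneWave.inv_pow_smul_planeWave (η := η) (ℓ := ℓ) 0
    ((ℓ a * ℓ b) • η) 0).add (.inv_pow_smul_planeWave 1 0 (-(ℓ a • ∂_{b} η + ℓ b • ∂_{a} η)))).add
      (.inv_pow_smul_planeWave 2 (-∂_{a} (∂_{b} η)) 0)
  simp only [add_zero] at h
  refine h.congr' ((eventually_ne_atTop 0).mono fun t ht => funext fun x => ?_)
  simp only [wavePotential, planeWave_apply, lineDerivOp_planeWave, LineDeriv.lineDerivOp_neg,
    LineDerivSMul.lineDerivOp_smul, LineDeriv.lineDerivOp_zero, add_apply, sub_apply, neg_apply,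
    smul_apply, zero_apply, smul_eq_mul, smul_zero, sub_zero, zero_mul, add_zero, zero_add,
    pow_one, inv_pow, Nat.reduceAdd, neg_add_rev, neg_mul, mul_neg]
  field_simp
  ring

lemma isAsymptoticPlaneWave_lineDerivOp_three (a b c : E) :
    IsAsymptoticPlaneWave η ℓ (fun t x => (∂_{a} (∂_{b} (∂_{c} (wavePotential η ℓ t)))) x)
      (ℓ a * ℓ b * ℓ c) := by
  have h := (((IsAsymptoticPlaneWave.planeWave_zero η ℓ).const_smul (ℓ a * ℓ b * ℓ c)).add
    (.inv_pow_smul_planeWave 0 ((ℓ a * ℓ b) • ∂_{c} η + (ℓ a * ℓ c) • ∂_{b} η +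
      (ℓ b * ℓ c) • ∂_{a} η) 0)).add
    ((IsAsymptoticPlaneWave.inv_pow_smul_planeWave 1 0 (-(ℓ a • ∂_{b} (∂_{c} η) +
      ℓ b • ∂_{a} (∂_{c} η) + ℓ c • ∂_{a} (∂_{b} η)))).add
        (.inv_pow_smul_planeWave 2 (-∂_{a} (∂_{b} (∂_{c} η))) 0))
  simp only [add_zero, smul_eq_mul, mul_one] at h
  refine h.congr' ((eventually_ne_atTop 0).mono fun t ht => funext fun x => ?_)
  simp only [wavePotential, planeWave_apply, lineDerivOp_planeWave, LineDeriv.lineDerivOp_neg,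
    LineDerivAdd.lineDerivOp_add, LineDerivSMul.lineDerivOp_smul, LineDeriv.lineDerivOp_zero,
    lineDerivOp_sub, add_apply, sub_apply, neg_apply, smul_apply, zero_apply, smul_eq_mul,
    smul_add, smul_zero, sub_zero, zero_mul, add_zero, zero_add, pow_one, inv_pow,
    Nat.reduceAdd, neg_add_rev, neg_mul, mul_neg]
  field_simp
  ring

end PlaneWaves

section WeakLimits

variable {E : Type*} [NormedAddCommGroup E] [NormedSpace ℝ E]
  [MeasurableSpace E] [BorelSpace E] {μ : Measure E} {Ω : Opens E} {ℓ : StrongDual ℝ E}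

lemma integrable_mul_cos {f : E → ℝ} (hf : Integrable f μ) (t : ℝ) :
    Integrable (fun x => f x * Real.cos (t * ℓ x)) μ :=
  hf.mul_bdd (c := 1) (by fun_prop) (.of_forall fun x => Real.abs_cos_le_one _)

lemma integrable_testFunction_sq [IsLocallyFiniteMeasure μ] (f : 𝓓(Ω, ℝ)) :
    Integrable (fun x => f x ^ 2) μ := by
  simpa only [sq] using!
    (f.integrable ((locallyIntegrable_const (1 : ℝ)).locallyIntegrableOn _)).mul_of_top_left
      f.memLp_top

lemma tendsto_integral_mul_cos_atTop [FiniteDimensional ℝ E] [μ.IsAddHaarMeasure] {f : E → ℝ}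
    (hf : Integrable f μ) (hℓ : ℓ ≠ 0) :
    Tendsto (fun t : ℝ => ∫ x, f x * Real.cos (t * ℓ x) ∂μ) atTop (𝓝 0) := by
  have frequency : Tendsto (fun t : ℝ => (t / (2 * Real.pi)) • ℓ) atTop
      (cocompact (StrongDual ℝ E)) := by
    rw [← Metric.cobounded_eq_cocompact, ← tendsto_norm_atTop_iff_cobounded]
    simp only [norm_smul]
    exact (tendsto_norm_atTop_atTop.comp
      (tendsto_id.atTop_div_const Real.two_pi_pos)).atTop_mul_const (norm_pos_iff.2 hℓ)
  have fourier := (tendsto_integral_exp_smul_cocompact (fun x => (f x : ℂ)) μ).comp frequency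
  have real_part := (Complex.continuous_re.tendsto 0).comp fourier
  rw [Complex.zero_re] at real_part
  refine real_part.congr fun t => ?_
  have hint : Integrable
      (fun x => Real.fourierChar (-((t / (2 * Real.pi)) • ℓ) x) • (f x : ℂ)) μ :=
    hf.ofReal.bdd_smul 1 (by fun_prop) (.of_forall fun x => (Circle.norm_coe _).le)
  simp only [Function.comp_apply]
  rw [← RCLike.re_eq_complex_re, ← integral_re hint]
  refine integral_congr_ae (.of_forall fun x => ?_)
  simp only [Circle.smul_def, Real.fourierChar_apply, RCLike.re_eq_complex_re, smul_apply,
    smul_eq_mul, Complex.re_mul_ofReal, Complex.exp_ofReal_mul_I_re]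
  rw [mul_comm, ← Real.cos_neg]
  congr 2
  field_simp

lemma tendsto_integral_mul_of_forall_eventually_abs_lt {X : Type*} [MeasurableSpace X]
    {ν : Measure X} {φ : X → ℝ} (hφ : Integrable φ ν) {r : ℝ → X → ℝ}
    (hr : ∀ ε > 0, ∀ᶠ t in atTop, ∀ x, |r t x| < ε) :
    Tendsto (fun t => ∫ x, φ x * r t x ∂ν) atTop (𝓝 0) := by
  refine Metric.tendsto_nhds.2 fun ε hε => ?_
  set I := ∫ x, ‖φ x‖ ∂ν
  have hI : 0 ≤ I := integral_nonneg fun x => norm_nonneg _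
  filter_upwards [hr (ε / (I + 1)) (by positivity)] with t ht
  rw [dist_zero_right]
  calc ‖∫ x, φ x * r t x ∂ν‖ ≤ ∫ x, ‖φ x‖ * (ε / (I + 1)) ∂ν :=
        norm_integral_le_of_norm_le (hφ.norm.mul_const _) <| .of_forall fun x => by
          rw [norm_mul]
          exact mul_le_mul_of_nonneg_left (ht x).le (norm_nonneg _)
    _ = I * (ε / (I + 1)) := integral_mul_const _ _
    _ < (I + 1) * (ε / (I + 1)) := by gcongr; linarith
    _ = ε := by field_simp

namespace IsAsymptoticPlaneWave

variable {η : 𝓓(Ω, ℝ)} {f : ℝ → 𝓓(Ω, ℝ)} {c : ℝ}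

lemma tendsto_integral_mul [FiniteDimensional ℝ E] [μ.IsAddHaarMeasure]
    (hf : IsAsymptoticPlaneWave η ℓ (fun t => f t) c) (hℓ : ℓ ≠ 0) {φ : E → ℝ}
    (hφ : Integrable φ μ) :
    Tendsto (fun t => ∫ x, φ x * f t x ∂μ) atTop (𝓝 0) := by
  have hφη : Integrable (fun x => φ x * η x * c) μ := (hφ.mul_of_top_left η.memLp_top).mul_const c
  have remainder := tendsto_integral_mul_of_forall_eventually_abs_lt hφ hf
  have main := tendsto_integral_mul_cos_atTop hφη hℓ
  have := remainder.add main
  rw [add_zero] at this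
  refine this.congr fun t => ?_
  have hA := integrable_mul_cos (ℓ := ℓ) hφη t
  rw [← integral_add ?_ hA]
  · refine integral_congr_ae (.of_forall fun x => ?_)
    simp only [smul_eq_mul]
    ring
  · refine ((hφ.mul_of_top_left (f t).memLp_top).sub hA).congr (.of_forall fun x => ?_)
    simp only [Pi.sub_apply, Pi.mul_apply, smul_eq_mul]
    ring

lemma tendsto_integral_sq [FiniteDimensional ℝ E] [μ.IsAddHaarMeasure] (hμΩ : μ Ω ≠ ⊤)
    (hf : IsAsymptoticPlaneWave η ℓ (fun t => f t) c) (hℓ : ℓ ≠ 0) :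
    Tendsto (fun t => ∫ x, f t x ^ 2 ∂μ) atTop (𝓝 (c ^ 2 * ((∫ x, η x ^ 2 ∂μ) / 2))) := by
  have hΩ : Integrable ((Ω : Set E).indicator (1 : E → ℝ)) μ :=
    (integrable_indicator_iff Ω.isOpen.measurableSet).2 (integrableOn_const hμΩ)
  have remainder := tendsto_integral_mul_of_forall_eventually_abs_lt hΩ
    fun ε hε => hf.eventually_abs_sq_sub_lt hε
  have hmean : Integrable (fun x => c ^ 2 / 2 * η x ^ 2) μ :=
    (integrable_testFunction_sq η).const_mul _
  have oscillation := (tendsto_integral_mul_cos_atTop hmean hℓ).comp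
    (tendsto_id.const_mul_atTop two_pos)
  have := (remainder.add oscillation).add_const (c ^ 2 * ((∫ x, η x ^ 2 ∂μ) / 2))
  rw [add_zero, zero_add] at this
  refine this.congr fun t => ?_
  have half_angle (x : E) : (Ω : Set E).indicator 1 x *
      (f t x ^ 2 - (η x * Real.cos (t * ℓ x) * c) ^ 2) =
        f t x ^ 2 - (c ^ 2 / 2 * η x ^ 2 + c ^ 2 / 2 * η x ^ 2 * Real.cos (2 * t * ℓ x)) := by
    have hcos : Real.cos (2 * t * ℓ x) = 2 * Real.cos (t * ℓ x) ^ 2 - 1 := by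
      rw [mul_assoc, Real.cos_two_mul]
    by_cases hx : x ∈ Ω
    · rw [Set.indicator_of_mem (show x ∈ (Ω : Set E) from hx), hcos, Pi.one_apply]
      ring
    · rw [Set.indicator_of_notMem (show x ∉ (Ω : Set E) from hx),
        testFunction_eq_zero_of_notMem (f t) hx, testFunction_eq_zero_of_notMem η hx]
      ring
  simp only [half_angle, Function.comp_apply, id_eq]
  rw [integral_sub (integrable_testFunction_sq _) (by exact hmean.add (integrable_mul_cos hmean _)),
    integral_add hmean (integrable_mul_cos hmean _), integral_const_mul]
  ring

end IsAsymptoticPlaneWave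

end WeakLimits

section WaveAmplitudes

variable {ι : Type*} [Fintype ι] {Ω : Opens (ι → ℝ)}

local notation "𝐞" i:max => (Pi.single i (1 : ℝ) : _ → ℝ)

/-- The frequency `x ↦ x · ξ` of plane waves in the direction `ξ`. -/
def frequency (ξ : ι → ℝ) : StrongDual ℝ (ι → ℝ) := ∑ i, ξ i • ContinuousLinearMap.proj i

lemma frequency_apply (ξ x : ι → ℝ) : frequency ξ x = x ⬝ᵥ ξ := by
  simp [frequency, dotProduct, mul_comm]

variable (η : 𝓓(Ω, ℝ))

lemma isAsymptoticPlaneWave_lineDerivOp_sum_smul_rotatedGradient (ℓ : StrongDual ℝ (ι → ℝ))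
    (b : ι → ℝ) (e a c : ι → ℝ) :
    IsAsymptoticPlaneWave η ℓ
      (fun t x => (∂_{e} (∑ j, b j • rotatedGradient a c (wavePotential η ℓ t) j)) x) 0 := by
  have h := IsAsymptoticPlaneWave.sum Finset.univ fun j =>
    (((isAsymptoticPlaneWave_lineDerivOp_two η ℓ e c).const_smul (a j)).sub
      ((isAsymptoticPlaneWave_lineDerivOp_two η ℓ e a).const_smul (c j))).const_smul (b j)
  simp only [smul_zero, sub_zero, Finset.sum_const_zero] at h
  refine h.congr' (.of_forall fun t => funext fun x => ?_)
  simp only [rotatedGradient, LineDeriv.lineDerivOp_sum, testFunction_sum_apply, lineDerivOp_sub,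
    LineDerivSMul.lineDerivOp_smul, sub_apply, smul_apply]

variable [DecidableEq ι] {ξ : ι → ℝ}

lemma frequency_single (ξ : ι → ℝ) (i : ι) : frequency ξ (𝐞 i) = ξ i := by
  rw [frequency_apply, single_one_dotProduct]

lemma isAsymptoticPlaneWave_velocity (hξ : ξ ⬝ᵥ ξ = 1) {a : ι → ℝ} (ha : a ⬝ᵥ ξ = 0) (i : ι) :
    IsAsymptoticPlaneWave η (frequency ξ)
      (fun t => velocity a ξ (wavePotential η (frequency ξ) t) i) (a i) := by
  have h := IsAsymptoticPlaneWave.sum Finset.univ fun m =>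
    ((isAsymptoticPlaneWave_lineDerivOp_three η (frequency ξ) (𝐞 m) (𝐞 m) ξ).const_smul (a i)).sub
      ((isAsymptoticPlaneWave_lineDerivOp_three η (frequency ξ) (𝐞 m) (𝐞 m) a).const_smul (ξ i))
  have amplitude : ∑ m, (a i • (ξ m * ξ m * (1 : ℝ)) - ξ i • (ξ m * ξ m * (0 : ℝ))) = a i := by
    simp only [mul_one, mul_zero, smul_eq_mul, sub_zero, ← Finset.mul_sum]
    rw [← dotProduct, hξ, mul_one]
  simp only [frequency_single, frequency_apply ξ ξ, frequency_apply ξ a, hξ, ha, amplitude] at h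
  refine h.congr' (.of_forall fun t => funext fun x => ?_)
  simp only [velocity, coordLaplacian, rotatedGradient, testFunction_sum_apply, lineDerivOp_sub,
    LineDerivSMul.lineDerivOp_smul, sub_apply, smul_apply]

variable {η} {ℓ : StrongDual ℝ (ι → ℝ)}

lemma IsAsymptoticPlaneWave.sub_diagonal {A : ℝ → Matrix ι ι 𝓓(Ω, ℝ)} {c : Matrix ι ι ℝ}
    (hA : ∀ i j, IsAsymptoticPlaneWave η ℓ (fun t => A t i j) (c i j)) {p : ℝ → 𝓓(Ω, ℝ)} {r : ℝ}
    (hp : IsAsymptoticPlaneWave η ℓ (fun t => p t) r) (i j : ι) :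
    IsAsymptoticPlaneWave η ℓ (fun t => ⇑(A t i j - Matrix.diagonal (fun _ => p t) i j))
      (c i j - Matrix.diagonal (fun _ => r) i j) := by
  obtain rfl | hij := eq_or_ne i j
  · simpa only [Matrix.sub_apply, Matrix.diagonal_apply_eq] using! (hA i i).sub hp
  · simpa only [Matrix.sub_apply, Matrix.diagonal_apply_ne _ hij, sub_zero] using hA i j

lemma isAsymptoticPlaneWave_viscousStress {h : ℝ → ι → 𝓓(Ω, ℝ)}
    (hh : ∀ (e : ι → ℝ) i,
      IsAsymptoticPlaneWave η ℓ (fun t x => (∂_{e} (h t i) : 𝓓(Ω, ℝ)) x) 0) (i j : ι) :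
    IsAsymptoticPlaneWave η ℓ (fun t => viscousStress (h t) i j) 0 := by
  have hdiv : IsAsymptoticPlaneWave η ℓ (fun t => divergence (h t)) 0 := by
    have := IsAsymptoticPlaneWave.sum Finset.univ fun m => hh (𝐞 m) m
    rw [Finset.sum_const_zero] at this
    refine this.congr' (.of_forall fun t => funext fun x => ?_)
    rw [divergence, testFunction_sum_apply]
  have hgrad (i j : ι) : IsAsymptoticPlaneWave η ℓ
      (fun t x => (∂_{𝐞 i} (h t j) + ∂_{𝐞 j} (h t i) : 𝓓(Ω, ℝ)) x) ((0 : Matrix ι ι ℝ) i j) := by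
    simpa using! (hh (𝐞 i) j).add (hh (𝐞 j) i)
  simpa using! IsAsymptoticPlaneWave.sub_diagonal hgrad hdiv i j

lemma isAsymptoticPlaneWave_deviator {A : ℝ → Matrix ι ι 𝓓(Ω, ℝ)} {c : Matrix ι ι ℝ}
    (hA : ∀ i j, IsAsymptoticPlaneWave η ℓ (fun t => A t i j) (c i j)) (i j : ι) :
    IsAsymptoticPlaneWave η ℓ (fun t => deviator (A t) i j)
      (c i j - Matrix.diagonal (fun _ => (Fintype.card ι : ℝ)⁻¹ * c.trace) i j) := by
  refine IsAsymptoticPlaneWave.sub_diagonal hA ?_ i j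
  refine ((IsAsymptoticPlaneWave.sum Finset.univ fun k => hA k k).const_smul _).congr'
    (.of_forall fun t => funext fun x => ?_)
  simp only [meanTrace, Matrix.trace, Matrix.diag, testFunction_sum_apply, smul_apply]

variable (η)

lemma isAsymptoticPlaneWave_doubleCurl (hξ : ξ ⬝ᵥ ξ = 1) {N : Matrix ι ι ℝ}
    (hN : N.mulVec ξ = 0) (i j : ι) :
    IsAsymptoticPlaneWave η (frequency ξ)
      (fun t => doubleCurl N ξ (∂_{ξ} (wavePotential η (frequency ξ) t)) i j) (N i j) := by
  have third (b c : ι → ℝ) := isAsymptoticPlaneWave_lineDerivOp_three η (frequency ξ) b c ξ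
  have h := ((((third ξ ξ).const_smul (N i j)).sub ((third (N j) ξ).const_smul (ξ i))).sub
    ((third (N i) ξ).const_smul (ξ j))).add
      (((IsAsymptoticPlaneWave.sum Finset.univ fun m =>
        third (𝐞 m) (N m)).const_smul (ξ i)).const_smul (ξ j))
  have hNξ (m : ι) : N m ⬝ᵥ ξ = 0 := congrFun hN m
  simp only [frequency_apply, hξ, hNξ, mul_one, mul_zero, smul_eq_mul, sub_zero,
    Finset.sum_const_zero, add_zero] at h
  refine h.congr' (.of_forall fun t => funext fun x => ?_)
  simp only [doubleCurl, divergence, Matrix.of_apply, testFunction_sum_apply, add_apply,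
    sub_apply, smul_apply, smul_eq_mul]

lemma isAsymptoticPlaneWave_stress (B : Matrix ι ι ℝ) (a : ι → ℝ) (hξ : ξ ⬝ᵥ ξ = 1)
    {N : Matrix ι ι ℝ} (hN : N.mulVec ξ = 0) (i j : ι) :
    IsAsymptoticPlaneWave η (frequency ξ)
      (fun t => stress B N a ξ (wavePotential η (frequency ξ) t) i j) (N i j) := by
  have viscous := isAsymptoticPlaneWave_viscousStress (fun e i =>
    isAsymptoticPlaneWave_lineDerivOp_sum_smul_rotatedGradient η (frequency ξ) (B i) e a ξ) i j
  simpa only [zero_add] using! viscous.add (isAsymptoticPlaneWave_doubleCurl η hξ hN i j)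

end WaveAmplitudes

section CubeSubsolutions

variable {d : ℕ}

/-- The unit cube as an open set, the domain of the test functions. -/
def openCube (d : ℕ) : Opens (Vec d) where
  carrier := unitCube d
  is_open' := by
    simpa only [unitCube, Set.ofPred_forall] using!
      isOpen_iInter_of_finite fun i => isOpen_Ioo.preimage (continuous_apply i)

lemma volume_openCube_ne_top (d : ℕ) : volume (openCube d : Set (Vec d)) ≠ ⊤ := by
  have hbdd : Bornology.IsBounded (unitCube d) :=
    (Metric.isBounded_Icc 0 1).subset fun x hx => ⟨fun i => (hx i).1.le, fun i => (hx i).2.le⟩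
  exact hbdd.measure_lt_top.ne

lemma exists_cutoff (d : ℕ) :
    ∃ η : 𝓓(openCube d, ℝ), (∀ x, |η x| ≤ 1) ∧ 0 < ∫ x, η x ^ 2 := by
  let b : ContDiffBump (fun _ => 1 / 2 : Vec d) := ⟨1 / 8, 1 / 4, by norm_num, by norm_num⟩
  have support_subset : tsupport b ⊆ unitCube d := fun x hx i => by
    rw [b.tsupport_eq] at hx
    have := abs_le.1 ((dist_le_pi_dist x _ i).trans hx)
    constructor <;> linarith
  let η : 𝓓(openCube d, ℝ) := ⟨b, b.contDiff, b.hasCompactSupport, support_subset⟩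
  refine ⟨η, fun x => (abs_of_nonneg b.nonneg).trans_le b.le_one, ?_⟩
  refine Continuous.integral_pos_of_hasCompactSupport_nonneg_nonzero (x := fun _ => 1 / 2)
    (η.continuous.pow 2) (η.hasCompactSupport.comp_left (g := fun r : ℝ => r ^ 2) (by simp))
    (fun x => sq_nonneg _) ?_
  have center : η (fun _ => 1 / 2) = 1 :=
    b.one_of_mem_closedBall (Metric.mem_closedBall_self b.rIn_pos.le)
  rw [center]
  norm_num

lemma exists_unit_normal {w : Vec d × S0 d} (hw : w ∈ Lam d) :
    ∃ (q : ℝ) (ξ : Vec d), ξ ⬝ᵥ ξ = 1 ∧ w.1 ⬝ᵥ ξ = 0 ∧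
      (Matrix.of (w.2 : Mat d) + q • 1).mulVec ξ = 0 := by
  obtain ⟨-, q, ξ, hξ, hU, hv⟩ := hw
  have hpos : 0 < ξ ⬝ᵥ ξ := Matrix.dotProduct_self_star_pos_iff.2 hξ
  have hker : (Matrix.of (w.2 : Mat d) + q • 1).mulVec ξ = 0 := by
    rw [Matrix.add_mulVec, Matrix.smul_mulVec, Matrix.one_mulVec]
    exact funext hU
  refine ⟨q, (√(ξ ⬝ᵥ ξ))⁻¹ • ξ, ?_, ?_, ?_⟩
  · rw [smul_dotProduct, dotProduct_smul, smul_smul, smul_eq_mul, ← mul_inv,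
      Real.mul_self_sqrt hpos.le, inv_mul_cancel₀ hpos.ne']
  · rw [dotProduct_smul, show w.1 ⬝ᵥ ξ = 0 from hv, smul_zero]
  · rw [Matrix.mulVec_smul, hker, smul_zero]

/-- The state with velocity `v` and flux the deviator of `A`. -/
def state (v : Fin d → 𝓓(openCube d, ℝ)) {A : Matrix (Fin d) (Fin d) 𝓓(openCube d, ℝ)}
    (hA : A.IsSymm) (x : Vec d) : Vec d × S0 d :=
  (fun i => v i x, ⟨fun i j => deviator A i j x,
    fun i j => congrArg (fun f : 𝓓(openCube d, ℝ) => f x) ((isSymm_deviator hA).apply j i),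
    (testFunction_sum_apply _ _ x).symm.trans <|
      congrArg (fun f : 𝓓(openCube d, ℝ) => f x) (trace_deviator A)⟩)

/-- The squared Euclidean norm `|v|² + |U|²` of a state. -/
def stateNormSq (w : Vec d × S0 d) : ℝ :=
  (∑ i, w.1 i ^ 2) + ∑ i, ∑ j, (w.2 : Mat d) i j ^ 2

lemma stateNormSq_pos {w : Vec d × S0 d} (hw : w.1 ≠ 0) : 0 < stateNormSq w := by
  obtain ⟨i, hi⟩ := Function.ne_iff.1 hw
  have hpos : 0 < ∑ i, w.1 i ^ 2 :=
    Finset.sum_pos' (fun _ _ => sq_nonneg _) ⟨i, Finset.mem_univ _, sq_pos_of_ne_zero hi⟩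
  exact add_pos_of_pos_of_nonneg hpos
    (Finset.sum_nonneg fun _ _ => Finset.sum_nonneg fun _ _ => sq_nonneg _)

/-- A smooth subsolution `w = (v, U)` with pressure `q`, all compactly supported in the unit
cube: `div U + ∇q = B v` and `div v = 0`. -/
def IsLocalizedSubsolution (B : Mat d) (w : Vec d → Vec d × S0 d) (q : Vec d → ℝ) : Prop :=
  ContDiff ℝ (⊤ : ℕ∞) (fun x => (w x).1) ∧
  (∀ i j, ContDiff ℝ (⊤ : ℕ∞) (fun x => ((w x).2 : Mat d) i j)) ∧
  ContDiff ℝ (⊤ : ℕ∞) q ∧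
  HasCompactSupport w ∧ tsupport w ⊆ unitCube d ∧
  HasCompactSupport q ∧ tsupport q ⊆ unitCube d ∧
  (∀ x i, (∑ j, pd j (fun y => ((w y).2 : Mat d) i j) x) + pd i q x = ∑ j, B i j * (w x).1 j) ∧
  (∀ x, ∑ i, pd i (fun y => (w y).1 i) x = 0)

section State

variable {v : Fin d → 𝓓(openCube d, ℝ)} {A : Matrix (Fin d) (Fin d) 𝓓(openCube d, ℝ)}
  (hA : A.IsSymm)

lemma exists_isCompact_state_eq_zero :
    ∃ K ⊆ unitCube d, IsCompact K ∧ ∀ x ∉ K, state v hA x = 0 := by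
  refine ⟨(⋃ i, tsupport (v i)) ∪ ⋃ i, ⋃ j, tsupport (deviator A i j), ?_, ?_, fun x hx => ?_⟩
  · exact Set.union_subset (Set.iUnion_subset fun i => (v i).tsupport_subset)
      (Set.iUnion₂_subset fun i j => (deviator A i j).tsupport_subset)
  · exact (isCompact_iUnion fun i => (v i).hasCompactSupport).union
      (isCompact_iUnion fun i => isCompact_iUnion fun j => (deviator A i j).hasCompactSupport)
  · simp only [Set.mem_union, Set.mem_iUnion, not_or, not_exists] at hx
    exact Prod.ext (funext fun i => image_eq_zero_of_notMem_tsupport (f := v i) (hx.1 i))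
      (Subtype.ext <| funext₂ fun i j =>
        image_eq_zero_of_notMem_tsupport (f := deviator A i j) (hx.2 i j))

lemma isLocalizedSubsolution_state {B : Mat d} (hv : divergence v = 0)
    (hdiv : ∀ i, divergence (A i) = ∑ j, B i j • v j) :
    IsLocalizedSubsolution B (state v hA) (meanTrace A) := by
  obtain ⟨K, hKcube, hK, hzero⟩ := exists_isCompact_state_eq_zero (v := v) hA
  have eval {f g : 𝓓(openCube d, ℝ)} (h : f = g) (x : Vec d) : f x = g x := by rw [h]
  refine ⟨contDiff_pi.2 fun i => (v i).contDiff, fun i j => (deviator A i j).contDiff,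
    (meanTrace A).contDiff, .intro hK hzero, ?_, (meanTrace A).hasCompactSupport,
    (meanTrace A).tsupport_subset, fun x i => ?_, fun x => ?_⟩
  · exact (closure_minimal (s := Function.support (state v hA))
      (fun x hx => by_contra fun h => hx (hzero x h)) hK.isClosed).trans hKcube
  · simpa only [divergence, add_apply, testFunction_sum_apply, lineDerivOp_apply_eq_fderiv,
      smul_apply] using! eval ((divergence_deviator A i).trans (hdiv i)) x
  · simpa only [divergence, testFunction_sum_apply, lineDerivOp_apply_eq_fderiv] using! eval hv x

lemma integral_stateNormSq_state :
    ∫ x in unitCube d, stateNormSq (state v hA x) =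
      (∑ i, ∫ x, v i x ^ 2) + ∑ i, ∑ j, ∫ x, deviator A i j x ^ 2 := by
  have hv (i : Fin d) := integrable_testFunction_sq (μ := volume) (v i)
  have hU (i j : Fin d) := integrable_testFunction_sq (μ := volume) (deviator A i j)
  rw [setIntegral_eq_integral_of_forall_compl_eq_zero fun x hx => ?_]
  · simp only [← integral_finsetSum Finset.univ fun i _ => hv i,
      ← integral_finsetSum Finset.univ fun j _ => hU _ j]
    rw [← integral_finsetSum _ fun i _ => integrable_finsetSum _ fun j _ => hU i j,
      ← integral_add (integrable_finsetSum _ fun i _ => hv i)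
        (integrable_finsetSum _ fun i _ => integrable_finsetSum _ fun j _ => hU i j)]
    rfl
  · obtain ⟨K, hKcube, -, hzero⟩ := exists_isCompact_state_eq_zero (v := v) hA
    simp [hzero x fun h => hx (hKcube h), stateNormSq]

end State

lemma tendsto_integral_stateNormSq_state {η : 𝓓(openCube d, ℝ)} {ℓ : StrongDual ℝ (Vec d)}
    {v : ℝ → Fin d → 𝓓(openCube d, ℝ)} {A : ℝ → Matrix (Fin d) (Fin d) 𝓓(openCube d, ℝ)}
    {w : Vec d × S0 d} (hA : ∀ t, (A t).IsSymm) (hℓ : ℓ ≠ 0)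
    (hv : ∀ i, IsAsymptoticPlaneWave η ℓ (fun t => v t i) (w.1 i))
    (hU : ∀ i j, IsAsymptoticPlaneWave η ℓ (fun t => deviator (A t) i j) ((w.2 : Mat d) i j)) :
    Tendsto (fun t => ∫ x in unitCube d, stateNormSq (state (v t) (hA t) x)) atTop
      (𝓝 (stateNormSq w * ((∫ x, η x ^ 2) / 2))) := by
  simp only [integral_stateNormSq_state]
  simp only [stateNormSq, add_mul, Finset.sum_mul]
  exact (tendsto_finsetSum _ fun i _ =>
    (hv i).tendsto_integral_sq (volume_openCube_ne_top d) hℓ).add <|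
      tendsto_finsetSum _ fun i _ => tendsto_finsetSum _ fun j _ =>
        (hU i j).tendsto_integral_sq (volume_openCube_ne_top d) hℓ

lemma sub_diagonal_trace_add_smul_one (U : S0 d) (q : ℝ) (i j : Fin d) :
    (Matrix.of (U : Mat d) + q • 1 : Matrix _ _ ℝ) i j - Matrix.diagonal
      (fun _ => (Fintype.card (Fin d) : ℝ)⁻¹ * (Matrix.of (U : Mat d) + q • 1).trace) i j =
        (U : Mat d) i j := by
  have hd : (d : ℝ) ≠ 0 := Nat.cast_ne_zero.2 i.pos.ne'
  have htrace : (Matrix.of (U : Mat d) + q • 1).trace = q * d := by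
    rw [Matrix.trace_add, Matrix.trace_smul, Matrix.trace_one, Fintype.card_fin, smul_eq_mul,
      show (Matrix.of (U : Mat d)).trace = 0 from U.2.2, zero_add]
  rw [htrace, Fintype.card_fin, inv_mul_eq_div, mul_div_cancel_right₀ q hd,
    ← Matrix.smul_one_eq_diagonal, Matrix.add_apply, add_sub_cancel_right, Matrix.of_apply]

lemma exists_family_isLocalizedSubsolution (B : Mat d) {η : 𝓓(openCube d, ℝ)}
    (hη : ∀ x, |η x| ≤ 1) {w : Vec d × S0 d} (hw : w ∈ Lam d) :
    ∃ (W : ℝ → Vec d → Vec d × S0 d) (q : ℝ → Vec d → ℝ),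
      (∀ t, IsLocalizedSubsolution B (W t) (q t)) ∧
      (∀ δ > 0, ∀ᶠ t in atTop, ∀ x, Metric.infDist (W t x) (segment ℝ (-w) w) < δ) ∧
      (∀ φ : Vec d → ℝ, Integrable φ →
        (∀ i, Tendsto (fun t => ∫ x, φ x * (W t x).1 i) atTop (𝓝 0)) ∧
        (∀ i j, Tendsto (fun t => ∫ x, φ x * ((W t x).2 : Mat d) i j) atTop (𝓝 0))) ∧
      Tendsto (fun t => ∫ x in unitCube d, stateNormSq (W t x)) atTop
        (𝓝 (stateNormSq w * ((∫ x, η x ^ 2) / 2))) := by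
  obtain ⟨q, ξ, hξ, hv, hN⟩ := exists_unit_normal hw
  set N : Matrix (Fin d) (Fin d) ℝ := Matrix.of (w.2 : Mat d) + q • 1
  have hNsymm : N.IsSymm := .add (.ext fun i j => w.2.2.1 j i) (Matrix.isSymm_one.smul q)
  let ψ (t : ℝ) := wavePotential η (frequency ξ) t
  have hA (t : ℝ) : (stress B N w.1 ξ (ψ t)).IsSymm := isSymm_stress B hNsymm w.1 ξ (ψ t)
  have hfreq : frequency ξ ≠ 0 := fun h => by
    simpa [frequency_apply, hξ] using congrArg (fun ℓ => ℓ ξ) h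
  have hvel (i : Fin d) := isAsymptoticPlaneWave_velocity η hξ hv i
  have hflux (i j : Fin d) : IsAsymptoticPlaneWave η (frequency ξ)
      (fun t => deviator (stress B N w.1 ξ (ψ t)) i j) ((w.2 : Mat d) i j) := by
    rw [← sub_diagonal_trace_add_smul_one w.2 q]
    exact isAsymptoticPlaneWave_deviator (isAsymptoticPlaneWave_stress η B w.1 hξ hN) i j
  refine ⟨fun t => state (velocity w.1 ξ (ψ t)) (hA t),
    fun t => meanTrace (stress B N w.1 ξ (ψ t)), fun t => ?_, fun δ hδ => ?_, fun φ hφ => ?_, ?_⟩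
  · exact isLocalizedSubsolution_state (hA t) (divergence_velocity _ _ _)
      (divergence_stress B N _ _ _)
  · exact ((IsAsymptoticPlaneWave.pi hvel).prodMk
      (.of_coe (.pi fun i => .pi (hflux i)))).eventually_infDist_segment_lt hη hδ
  · exact ⟨fun i => (hvel i).tendsto_integral_mul hfreq hφ,
      fun i j => (hflux i j).tendsto_integral_mul hfreq hφ⟩
  · exact tendsto_integral_stateNormSq_state hA hfreq hvel hflux

end CubeSubsolutions

/-- **Lemma 3.4.** Let `d ≥ 2` and `B` a fixed matrix. There is `C > 0`
such that for every `w̄ = (v̄, Ū) ∈ Λ` there are subsolutions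
`(v_k, U_k) ∈ C_c^∞(Q₁; ℝ^d × S₀^{d×d})` with pressures `q_k ∈ C_c^∞(Q₁)`
(`div U_k + ∇q_k = B v_k`, `div v_k = 0` on ℝ^d) such that
(a) `sup_{Q₁} dist((v_k, U_k)(x), [−w̄, w̄]) → 0`;
(b) `(v_k, U_k) → 0` in the sense of distributions;
(c) `∫_{Q₁} |(v_k, U_k)|² ≥ C |w̄|²` for all `k`. -/
theorem stmt5 (d : ℕ) (hd : 2 ≤ d) (B : Mat d) :
    ∃ C : ℝ, 0 < C ∧
      ∀ wb ∈ Lam d,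
        ∃ (w : ℕ → Vec d → Vec d × S0 d) (q : ℕ → Vec d → ℝ),
          (∀ k,
            ContDiff ℝ (⊤ : ℕ∞) (fun x => (w k x).1) ∧
            (∀ i j, ContDiff ℝ (⊤ : ℕ∞) (fun x => ((w k x).2 : Mat d) i j)) ∧
            ContDiff ℝ (⊤ : ℕ∞) (q k) ∧
            HasCompactSupport (w k) ∧ tsupport (w k) ⊆ unitCube d ∧
            HasCompactSupport (q k) ∧ tsupport (q k) ⊆ unitCube d ∧
            (∀ x i, (∑ j, pd j (fun y => ((w k y).2 : Mat d) i j) x) + pd i (q k) x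
                = ∑ j, B i j * (w k x).1 j) ∧
            (∀ x, ∑ i, pd i (fun y => (w k y).1 i) x = 0)) ∧
          -- (a) uniform convergence to the segment [−w̄, w̄]
          (∀ δ : ℝ, 0 < δ → ∃ N : ℕ, ∀ k ≥ N, ∀ x ∈ unitCube d,
            Metric.infDist (w k x) (segment ℝ (-wb) wb) < δ) ∧
          -- (b) convergence to 0 in the sense of distributions
          (∀ φ : Vec d → ℝ, ContDiff ℝ (⊤ : ℕ∞) φ → HasCompactSupport φ →
            tsupport φ ⊆ unitCube d →
            (∀ i, Tendsto (fun k => ∫ x, φ x * (w k x).1 i) atTop (𝓝 0)) ∧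
            (∀ i j, Tendsto (fun k => ∫ x, φ x * ((w k x).2 : Mat d) i j) atTop (𝓝 0))) ∧
          -- (c) lower bound on the L² norm
          (∀ k, (∫ x in unitCube d,
              ((∑ i, ((w k x).1 i) ^ 2) + ∑ i, ∑ j, (((w k x).2 : Mat d) i j) ^ 2))
            ≥ C * ((∑ i, (wb.1 i) ^ 2) + ∑ i, ∑ j, ((wb.2 : Mat d) i j) ^ 2)) := by
  obtain ⟨η, hη, hpos⟩ := exists_cutoff d
  refine ⟨(∫ x, η x ^ 2) / 4, by positivity, fun wb hwb => ?_⟩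
  obtain ⟨W, q, hsub, hsegment, hweak, henergy⟩ :=
    exists_family_isLocalizedSubsolution B hη hwb
  have henergy_lt :
      stateNormSq wb * ((∫ x, η x ^ 2) / 4) < stateNormSq wb * ((∫ x, η x ^ 2) / 2) :=
    mul_lt_mul_of_pos_left (by linarith) (stateNormSq_pos hwb.1)
  obtain ⟨T, hT⟩ := eventually_atTop.1 (henergy.eventually_const_lt henergy_lt)
  have hshift : Tendsto (fun k : ℕ => (k : ℝ) + T) atTop atTop :=
    tendsto_atTop_add_const_right _ T tendsto_natCast_atTop_atTop
  refine ⟨fun k => W (k + T), fun k => q (k + T), fun k => hsub _, fun δ hδ => ?_,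
    fun φ hφ hφc _ => ?_, fun k => ?_⟩
  · obtain ⟨n, hn⟩ := eventually_atTop.1 (hshift.eventually (hsegment δ hδ))
    exact ⟨n, fun k hk x _ => hn k hk x⟩
  · have h := hweak φ (hφ.continuous.integrable_of_hasCompactSupport hφc)
    exact ⟨fun i => (h.1 i).comp hshift, fun i j => (h.2 i j).comp hshift⟩
  · exact (mul_comm _ _).trans_le (hT _ (le_add_of_nonneg_left k.cast_nonneg)).le
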